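/- For each n let V_n be an n×n orthogonal matrix, let f, g: [0,1] → R_{>0} be bounded Riemann-integrable functions with ∫f > 0 and ∫g > 0, and set Σ_X = V_n diag(f(1/n), …, f(n/n)) V_nᵀ and Σ_ε = V_n diag(g(1/n), …, g(n/n)) V_nᵀ. Let X ~ N(0, Σ_X) and ε ~ N(0, Σ_ε) be independent, let β ∈ R and Y = βX + ε, and define the OLS estimator β̂ = XᵀY/‖X‖², its true conditional variance Var(β̂ | X) = XᵀΣ_εX/‖X‖⁴, and the naive variance estimator V̂_naive = εᵀ(‖X‖² I − XXᵀ)ε / (n‖X‖⁴). Then n·V̂_naive → (∫g)/(∫f) in probability, n·Var(β̂ | X) → (∫fg)/(∫f)², and hence the ratio Var(β̂ | X)/V̂_naive converges in probability to (∫ f(x)g(x) dx) / ((∫ f(x) dx)(∫ g(x) dx)); this limit is at most 1 — so naive i.i.d. inference for β is asymptotically valid — if and only if ∫ f(x)g(x) dx ≤ (∫ f(x) dx)(∫ g(x) dx). -/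

import Mathlib

open MeasureTheory ProbabilityTheory Filter Topology Matrix

noncomputable section

/-- Sample mean `X̄ = (1/n) Σ_i X_i`. -/
def sampleMean {ι : Type*} [Fintype ι] (x : ι → ℝ) : ℝ := (∑ i, x i) / (Fintype.card ι : ℝ)

/-- Sample covariance `T_n = (1/n) Σ_i (X_i - X̄)(Y_i - Ȳ)`. -/
def sampleCov {ι : Type*} [Fintype ι] (x y : ι → ℝ) : ℝ :=
  (∑ i, (x i - sampleMean x) * (y i - sampleMean y)) / (Fintype.card ι : ℝ)

/-- Sample correlation `ρₙ`. -/
def sampleCorr {ι : Type*} [Fintype ι] (x y : ι → ℝ) : ℝ :=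
  (∑ i, (x i - sampleMean x) * (y i - sampleMean y)) /
    (Real.sqrt (∑ i, (x i - sampleMean x) ^ 2) * Real.sqrt (∑ i, (y i - sampleMean y) ^ 2))

/-- Convergence in distribution: weak convergence of the laws, tested against
bounded continuous functions. -/
def TendstoInDistribution (μ : ℕ → Measure ℝ) (ν : Measure ℝ) : Prop :=
  ∀ f : BoundedContinuousFunction ℝ ℝ,
    Tendsto (fun n => ∫ x, f x ∂(μ n)) atTop (𝓝 (∫ x, f x ∂ν))

/-- Convergence in probability to a constant, for a sequence of laws on `ℝ`. -/
def TendstoInProbability (μ : ℕ → Measure ℝ) (c : ℝ) : Prop :=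
  ∀ ε : ℝ, 0 < ε → Tendsto (fun n => μ n {x | ε ≤ |x - c|}) atTop (𝓝 0)

/-- `μ` is the centered multivariate Gaussian law `N(0, S)` on `ℝ^n`, characterized à la
Cramér–Wold: every linear functional `⟨a, ·⟩` has law `N(0, aᵀ S a)`. -/
def IsCenteredGaussian {n : ℕ} (μ : Measure (Fin n → ℝ)) (S : Matrix (Fin n) (Fin n) ℝ) : Prop :=
  IsProbabilityMeasure μ ∧
    ∀ a : Fin n → ℝ,
      Measure.map (fun x => ∑ i, a i * x i) μ =
        gaussianReal 0 (Real.toNNReal (a ⬝ᵥ S.mulVec a))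

/-- The matrix `V diag(h(1/n), …, h(n/n)) Vᵀ`. -/
def specMatrix (n : ℕ) (V : Matrix (Fin n) (Fin n) ℝ) (h : ℝ → ℝ) : Matrix (Fin n) (Fin n) ℝ :=
  V * Matrix.diagonal (fun i : Fin n => h ((((i : ℕ) : ℝ) + 1) / n)) * Vᵀ

/-! Let `d` and `e` be the eigenvalues of `Σ_X` and `Σ_ε`. Writing `X = V diag(√d) z` and
`ε = V diag(√e) w` with independent standard Gaussian vectors `z`, `w`, orthogonality of `V` turns
each of `‖X‖²`, `‖ε‖²`, `Xᵀε` and `XᵀΣ_εX` into a weighted sum of i.i.d. variables, with weights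
`d`, `e`, `√d √e` and `d e`. By Chebyshev's inequality such sums divided by `n` concentrate at
the limits of their means, which for eigenvalues sampled from `f` and `g` are the limits `∫ f`,
`∫ g`, `0` and `∫ f g` of Riemann sums. All three statistics are continuous functions of these
four averages. -/

/-- Convergence in probability of random elements `A i`, each on its own measure space
`(Ω i, Q i)`, to the constant `a`. It is phrased with neighbourhoods instead of a distance, so that
products and continuous images need no estimates. -/
def ConcentratesAt {ι E : Type*} {Ω : ι → Type*} [∀ i, MeasurableSpace (Ω i)]
    [TopologicalSpace E] (Q : ∀ i, Measure (Ω i)) (l : Filter ι) (A : ∀ i, Ω i → E) (a : E) :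
    Prop :=
  ∀ U ∈ 𝓝 a, Tendsto (fun i => Q i {ω | A i ω ∉ U}) l (𝓝 0)

namespace ConcentratesAt

variable {ι E E' : Type*} {Ω : ι → Type*} [∀ i, MeasurableSpace (Ω i)] [TopologicalSpace E]
  [TopologicalSpace E'] {Q : ∀ i, Measure (Ω i)} {l : Filter ι} {A B : ∀ i, Ω i → E} {a b : E}

theorem congr' (hA : ConcentratesAt Q l A a) (hAB : ∀ᶠ i in l, A i = B i) :
    ConcentratesAt Q l B a :=
  fun U hU => (hA U hU).congr' (hAB.mono fun i hi => by rw [hi])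

theorem continuousAt_comp {φ : E → E'} (hA : ConcentratesAt Q l A a) (hφ : ContinuousAt φ a) :
    ConcentratesAt Q l (fun i ω => φ (A i ω)) (φ a) :=
  fun _ hU => hA _ (hφ hU)

theorem prodMk {A' : ∀ i, Ω i → E'} {a' : E'} (hA : ConcentratesAt Q l A a)
    (hA' : ConcentratesAt Q l A' a') :
    ConcentratesAt Q l (fun i ω => (A i ω, A' i ω)) (a, a') := by
  intro U hU
  obtain ⟨S, hS, T, hT, hST⟩ := mem_nhds_prod_iff.1 hU
  have hsum := (hA S hS).add (hA' T hT)
  rw [add_zero] at hsum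
  refine tendsto_of_tendsto_of_tendsto_of_le_of_le tendsto_const_nhds hsum
    (fun _ => zero_le) fun i => (measure_mono fun ω hω => ?_).trans (measure_union_le _ _)
  by_contra hmem
  simp only [Set.mem_union, Set.mem_ofPred_eq, not_or, not_not] at hmem
  exact hω (hST hmem)

theorem mul [Mul E] [ContinuousMul E] (hA : ConcentratesAt Q l A a)
    (hB : ConcentratesAt Q l B b) : ConcentratesAt Q l (fun i ω => A i ω * B i ω) (a * b) :=
  (hA.prodMk hB).continuousAt_comp continuous_mul.continuousAt

theorem pow [Monoid E] [ContinuousMul E] (hA : ConcentratesAt Q l A a) (k : ℕ) :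
    ConcentratesAt Q l (fun i ω => A i ω ^ k) (a ^ k) :=
  hA.continuousAt_comp (continuous_pow k).continuousAt

theorem sub [Sub E] [ContinuousSub E] (hA : ConcentratesAt Q l A a)
    (hB : ConcentratesAt Q l B b) : ConcentratesAt Q l (fun i ω => A i ω - B i ω) (a - b) :=
  (hA.prodMk hB).continuousAt_comp continuous_sub.continuousAt

theorem div [GroupWithZero E] [ContinuousInv₀ E] [ContinuousMul E]
    (hA : ConcentratesAt Q l A a) (hB : ConcentratesAt Q l B b) (hb : b ≠ 0) :
    ConcentratesAt Q l (fun i ω => A i ω / B i ω) (a / b) :=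
  (hA.prodMk hB).continuousAt_comp (continuousAt_fst.div continuousAt_snd hb)

theorem of_tendsto_variance [∀ i, IsProbabilityMeasure (Q i)] {A : ∀ i, Ω i → ℝ} {m : ℝ}
    (hA : ∀ i, MemLp (A i) 2 (Q i)) (hmean : Tendsto (fun i => ∫ ω, A i ω ∂Q i) l (𝓝 m))
    (hvar : Tendsto (fun i => Var[A i; Q i]) l (𝓝 0)) : ConcentratesAt Q l A m := by
  intro U hU
  obtain ⟨δ, hδ, hball⟩ := Metric.mem_nhds_iff.1 hU
  have hbound : Tendsto (fun i => ENNReal.ofReal (Var[A i; Q i] / (δ / 2) ^ 2)) l (𝓝 0) := by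
    simpa using ENNReal.tendsto_ofReal (hvar.div_const ((δ / 2) ^ 2))
  refine tendsto_of_tendsto_of_tendsto_of_le_of_le' tendsto_const_nhds hbound
    (Eventually.of_forall fun _ => zero_le) ?_
  filter_upwards [Metric.tendsto_nhds.1 hmean (δ / 2) (half_pos hδ)] with i hi
  refine (measure_mono fun ω hω => ?_).trans (meas_ge_le_variance_div_sq (hA i) (half_pos hδ))
  have hfar : δ ≤ dist (A i ω) m := not_lt.1 fun hlt => hω (hball hlt)
  have htri := dist_triangle (A i ω) (∫ ω, A i ω ∂Q i) m
  rw [Set.mem_ofPred_eq, ← Real.dist_eq]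
  linarith

section MeasurePreserving

variable {Ω' : ι → Type*} [∀ i, MeasurableSpace (Ω' i)] {P : ∀ i, Measure (Ω' i)}
  {T : ∀ i, Ω' i → Ω i}

theorem comp_measurePreserving (hA : ConcentratesAt Q l A a)
    (hT : ∀ i, MeasurePreserving (T i) (P i) (Q i)) :
    ConcentratesAt P l (fun i ω => A i (T i ω)) a :=
  fun U hU => tendsto_of_tendsto_of_tendsto_of_le_of_le tendsto_const_nhds (hA U hU)
    (fun _ => zero_le) fun i => (hT i).measure_preimage_le _

theorem of_comp_measurePreserving [MeasurableSpace E] [OpensMeasurableSpace E]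
    (hT : ∀ i, MeasurePreserving (T i) (P i) (Q i)) (hA : ∀ i, Measurable (A i))
    (h : ConcentratesAt P l (fun i ω => A i (T i ω)) a) : ConcentratesAt Q l A a := by
  intro U hU
  obtain ⟨O, hOU, hO, haO⟩ := mem_nhds_iff.1 hU
  refine tendsto_of_tendsto_of_tendsto_of_le_of_le tendsto_const_nhds (h O (hO.mem_nhds haO))
    (fun _ => zero_le) fun i => ?_
  calc Q i {ω | A i ω ∉ U} ≤ Q i {ω | A i ω ∉ O} := measure_mono fun ω hω hωO => hω (hOU hωO)
    _ = P i {ω | A i (T i ω) ∉ O} :=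
      ((hT i).measure_preimage (hA i hO.measurableSet.compl).nullMeasurableSet).symm

end MeasurePreserving

end ConcentratesAt

theorem ConcentratesAt.tendstoInProbability_map {Ω : ℕ → Type*} [∀ n, MeasurableSpace (Ω n)]
    {Q : ∀ n, Measure (Ω n)} {A : ∀ n, Ω n → ℝ} {c : ℝ} (h : ConcentratesAt Q atTop A c)
    (hA : ∀ n, AEMeasurable (A n) (Q n)) :
    TendstoInProbability (fun n => (Q n).map (A n)) c := by
  intro δ hδ
  refine (h _ (Metric.ball_mem_nhds c hδ)).congr fun n => ?_
  rw [Measure.map_apply_of_aemeasurable (hA n) (measurableSet_le (by fun_prop) (by fun_prop))]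
  simp only [Metric.mem_ball, not_lt, Real.dist_eq]
  rfl

section WeightedSums

variable {Ω : Type*} [MeasurableSpace Ω] {ν : Measure Ω} [IsProbabilityMeasure ν] {ψ : Ω → ℝ}

theorem memLp_weightedSum_pi {ι : Type*} [Fintype ι] (hψ : MemLp ψ 2 ν) (w : ι → ℝ) :
    MemLp (fun q : ι → Ω => ∑ i, w i * ψ (q i)) 2 (Measure.pi fun _ => ν) :=
  memLp_finsetSum _ fun i _ =>
    (hψ.comp_measurePreserving (measurePreserving_eval (fun _ => ν) i)).const_mul (w i)

theorem integral_weightedSum_pi {ι : Type*} [Fintype ι] (hψ : Integrable ψ ν) (w : ι → ℝ) :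
    ∫ q : ι → Ω, ∑ i, w i * ψ (q i) ∂(Measure.pi fun _ => ν) = (∑ i, w i) * ∫ x, ψ x ∂ν := by
  rw [integral_finsetSum _ fun i _ => (integrable_comp_eval hψ).const_mul (w i), Finset.sum_mul]
  refine Finset.sum_congr rfl fun i _ => ?_
  rw [integral_const_mul, integral_comp_eval (μ := fun _ => ν) hψ.aestronglyMeasurable]

theorem variance_weightedSum_pi {ι : Type*} [Fintype ι] (hψ : MemLp ψ 2 ν) (w : ι → ℝ) :
    Var[fun q : ι → Ω => ∑ i, w i * ψ (q i); Measure.pi fun _ => ν] =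
      (∑ i, w i ^ 2) * Var[ψ; ν] := by
  have h := variance_sum_pi (μ := fun _ => ν) fun i => hψ.const_mul (w i)
  simp only [variance_const_mul, ← Finset.sum_mul] at h
  rw [← h]
  congr 1
  ext q
  simp

theorem tendsto_inv_sq_mul_sum_sq {w : ∀ n : ℕ, Fin n → ℝ} {K : ℝ} (hw : ∀ n i, |w n i| ≤ K) :
    Tendsto (fun n : ℕ => (n : ℝ)⁻¹ ^ 2 * ∑ i, w n i ^ 2) atTop (𝓝 0) := by
  have hbound : Tendsto (fun n : ℕ => K ^ 2 * (n : ℝ)⁻¹) atTop (𝓝 0) := by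
    simpa using (tendsto_inv_atTop_nhds_zero_nat (𝕜 := ℝ)).const_mul (K ^ 2)
  refine squeeze_zero (fun n => by positivity) (fun n => ?_) hbound
  calc (n : ℝ)⁻¹ ^ 2 * ∑ i, w n i ^ 2
      ≤ (n : ℝ)⁻¹ ^ 2 * ∑ _i : Fin n, K ^ 2 := by
        refine mul_le_mul_of_nonneg_left (Finset.sum_le_sum fun i _ => ?_) (by positivity)
        exact sq_le_sq.2 ((hw n i).trans (le_abs_self K))
    _ = K ^ 2 * (n : ℝ)⁻¹ := by
        rcases eq_or_ne n 0 with rfl | hn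
        · simp
        · simp only [Finset.sum_const, Finset.card_univ, Fintype.card_fin, nsmul_eq_mul]
          field_simp

theorem concentratesAt_weightedAverage_pi (hψ : MemLp ψ 2 ν) {w : ∀ n : ℕ, Fin n → ℝ} {K m : ℝ}
    (hw : ∀ n i, |w n i| ≤ K)
    (hm : Tendsto (fun n : ℕ => (n : ℝ)⁻¹ * (∑ i, w n i) * ∫ x, ψ x ∂ν) atTop (𝓝 m)) :
    ConcentratesAt (fun n : ℕ => Measure.pi fun _ : Fin n => ν) atTop
      (fun n q => (n : ℝ)⁻¹ * ∑ i, w n i * ψ (q i)) m := by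
  refine .of_tendsto_variance (fun n => (memLp_weightedSum_pi hψ (w n)).const_mul _) ?_ ?_
  · simpa only [integral_const_mul, integral_weightedSum_pi (hψ.integrable one_le_two),
      ← mul_assoc] using hm
  · simpa only [variance_const_mul, variance_weightedSum_pi hψ, ← mul_assoc, zero_mul]
      using (tendsto_inv_sq_mul_sum_sq hw).mul_const Var[ψ; ν]

end WeightedSums

section EigenRoot

variable {n : ℕ}

/-- The square root `V diag(√d)` of the covariance matrix `V diag(d) Vᵀ`, which maps vectors of
independent coordinates to vectors with that covariance. -/
def eigenRoot (V : Matrix (Fin n) (Fin n) ℝ) (d : Fin n → ℝ) : Matrix (Fin n) (Fin n) ℝ :=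
  V * diagonal fun i => √(d i)

variable {V : Matrix (Fin n) (Fin n) ℝ} {d : Fin n → ℝ}

theorem eigenRoot_mul_transpose (V : Matrix (Fin n) (Fin n) ℝ) (hd : ∀ i, 0 ≤ d i) :
    eigenRoot V d * (eigenRoot V d)ᵀ = V * diagonal d * Vᵀ := by
  simp only [eigenRoot, transpose_mul, diagonal_transpose, Matrix.mul_assoc]
  simp only [← Matrix.mul_assoc (diagonal _) (diagonal _), diagonal_mul_diagonal,
    Real.mul_self_sqrt (hd _)]

theorem dotProduct_mulVec_mulVec_of_orthogonal (hV : Vᵀ * V = 1) (x y : Fin n → ℝ) :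
    (V *ᵥ x) ⬝ᵥ (V *ᵥ y) = x ⬝ᵥ y := by
  rw [dotProduct_mulVec, ← mulVec_transpose, mulVec_mulVec, hV, one_mulVec]

theorem eigenRoot_mulVec_dotProduct (hV : Vᵀ * V = 1) (d e x y : Fin n → ℝ) :
    (eigenRoot V d *ᵥ x) ⬝ᵥ (eigenRoot V e *ᵥ y) = ∑ i, √(d i) * √(e i) * (x i * y i) := by
  rw [eigenRoot, eigenRoot, ← mulVec_mulVec, ← mulVec_mulVec,
    dotProduct_mulVec_mulVec_of_orthogonal hV]
  simp only [dotProduct, mulVec_diagonal]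
  exact Finset.sum_congr rfl fun i _ => by ring

theorem sum_sq_eigenRoot_mulVec (hV : Vᵀ * V = 1) (hd : ∀ i, 0 ≤ d i) (x : Fin n → ℝ) :
    ∑ i, (eigenRoot V d *ᵥ x) i ^ 2 = ∑ i, d i * x i ^ 2 := by
  have h := eigenRoot_mulVec_dotProduct hV d d x x
  simpa only [dotProduct, ← sq, Real.sq_sqrt (hd _)] using h

theorem quadraticForm_eigenRoot_mulVec (hV : Vᵀ * V = 1) (hd : ∀ i, 0 ≤ d i)
    (e x : Fin n → ℝ) :
    (eigenRoot V d *ᵥ x) ⬝ᵥ ((V * diagonal e * Vᵀ) *ᵥ (eigenRoot V d *ᵥ x)) =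
      ∑ i, d i * e i * x i ^ 2 := by
  have hcancel : V * diagonal e * Vᵀ * eigenRoot V d =
      V * (diagonal e * diagonal fun i => √(d i)) := by
    rw [eigenRoot, Matrix.mul_assoc _ Vᵀ, ← Matrix.mul_assoc Vᵀ, hV, Matrix.one_mul,
      Matrix.mul_assoc]
  rw [mulVec_mulVec, hcancel, eigenRoot, ← mulVec_mulVec, ← mulVec_mulVec,
    dotProduct_mulVec_mulVec_of_orthogonal hV, ← mulVec_mulVec]
  simp only [dotProduct, mulVec_diagonal]
  refine Finset.sum_congr rfl fun i _ => ?_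
  linear_combination e i * x i ^ 2 * Real.sq_sqrt (hd i)

end EigenRoot

section QuadraticStatistics

variable {V : ∀ n, Matrix (Fin n) (Fin n) ℝ} {d e : ∀ n, Fin n → ℝ} {C D : ℝ}

theorem concentratesAt_normSq_pi {ν : Measure ℝ} [IsProbabilityMeasure ν]
    (hν : MemLp (fun x : ℝ => x ^ 2) 2 ν) (hV : ∀ n, (V n)ᵀ * V n = 1)
    (hd : ∀ n i, d n i ∈ Set.Icc 0 C) {F : ℝ}
    (hF : Tendsto (fun n : ℕ => (n : ℝ)⁻¹ * ∑ i, d n i) atTop (𝓝 F)) :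
    ConcentratesAt (fun n : ℕ => Measure.pi fun _ : Fin n => ν) atTop
      (fun n z => (n : ℝ)⁻¹ * ∑ i, (eigenRoot (V n) (d n) *ᵥ z) i ^ 2) (F * ∫ x, x ^ 2 ∂ν) := by
  simp only [sum_sq_eigenRoot_mulVec (hV _) fun i => (hd _ i).1]
  refine concentratesAt_weightedAverage_pi hν (K := C) (fun n i => ?_) (hF.mul_const _)
  rw [abs_of_nonneg (hd n i).1]
  exact (hd n i).2

theorem concentratesAt_quadraticForm_pi {ν : Measure ℝ} [IsProbabilityMeasure ν]
    (hν : MemLp (fun x : ℝ => x ^ 2) 2 ν) (hV : ∀ n, (V n)ᵀ * V n = 1)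
    (hd : ∀ n i, d n i ∈ Set.Icc 0 C) (he : ∀ n i, |e n i| ≤ D) {H : ℝ}
    (hH : Tendsto (fun n : ℕ => (n : ℝ)⁻¹ * ∑ i, d n i * e n i) atTop (𝓝 H)) :
    ConcentratesAt (fun n : ℕ => Measure.pi fun _ : Fin n => ν) atTop
      (fun n z => (n : ℝ)⁻¹ * ((eigenRoot (V n) (d n) *ᵥ z) ⬝ᵥ
        ((V n * diagonal (e n) * (V n)ᵀ) *ᵥ (eigenRoot (V n) (d n) *ᵥ z))))
      (H * ∫ x, x ^ 2 ∂ν) := by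
  simp only [quadraticForm_eigenRoot_mulVec (hV _) fun i => (hd _ i).1]
  refine concentratesAt_weightedAverage_pi hν (K := C * D) (fun n i => ?_) (hH.mul_const _)
  rw [abs_mul, abs_of_nonneg (hd n i).1]
  exact mul_le_mul (hd n i).2 (he n i) (abs_nonneg _) ((hd n i).1.trans (hd n i).2)

theorem concentratesAt_dotProduct_pi {ν : Measure (ℝ × ℝ)} [IsProbabilityMeasure ν]
    (hν : MemLp (fun z : ℝ × ℝ => z.1 * z.2) 2 ν) (horth : ∫ z, z.1 * z.2 ∂ν = 0)
    (hV : ∀ n, (V n)ᵀ * V n = 1) (hd : ∀ n i, d n i ≤ C) (he : ∀ n i, e n i ≤ D) :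
    ConcentratesAt (fun n : ℕ => Measure.pi fun _ : Fin n => ν) atTop
      (fun n q => (n : ℝ)⁻¹ * ((eigenRoot (V n) (d n) *ᵥ fun i => (q i).1) ⬝ᵥ
        (eigenRoot (V n) (e n) *ᵥ fun i => (q i).2))) 0 := by
  simp only [eigenRoot_mulVec_dotProduct (hV _)]
  refine concentratesAt_weightedAverage_pi hν (K := √C * √D) (fun n i => ?_) ?_
  · rw [abs_of_nonneg (by positivity)]
    gcongr
    exacts [hd n i, he n i]
  · simp only [horth, mul_zero, tendsto_const_nhds_iff]

end QuadraticStatistics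

theorem memLp_sq_gaussianReal (m : ℝ) (v : NNReal) :
    MemLp (fun x : ℝ => x ^ 2) 2 (gaussianReal m v) := by
  have h := (memLp_id_gaussianReal' (μ := m) (v := v) 4 (by simp)).norm_rpow_div 2
  have hexp : (4 / 2 : ENNReal) = 2 := by
    rw [show (4 : ENNReal) = 2 * 2 by norm_num, ENNReal.mul_div_cancel_right] <;> simp
  simpa [hexp] using h

theorem integral_sq_gaussianReal (v : NNReal) : ∫ x, x ^ 2 ∂gaussianReal 0 v = v := by
  rw [← variance_fun_id_gaussianReal (μ := 0), variance_of_integral_eq_zero (by fun_prop) (by simp)]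

theorem memLp_mul_prod_gaussianReal (m₁ m₂ : ℝ) (v₁ v₂ : NNReal) :
    MemLp (fun z : ℝ × ℝ => z.1 * z.2) 2 ((gaussianReal m₁ v₁).prod (gaussianReal m₂ v₂)) := by
  rw [memLp_two_iff_integrable_sq (by fun_prop)]
  simpa only [mul_pow] using ((memLp_sq_gaussianReal m₁ v₁).integrable one_le_two).mul_prod
    ((memLp_sq_gaussianReal m₂ v₂).integrable one_le_two)

namespace IsCenteredGaussian

variable {n : ℕ} {μ ε : Measure (Fin n → ℝ)} {S : Matrix (Fin n) (Fin n) ℝ}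

theorem eq_of_cov_eq (hμ : IsCenteredGaussian μ S) (hε : IsCenteredGaussian ε S) : μ = ε := by
  have := hμ.1
  have := hε.1
  -- Cramér–Wold: a law on `ℝⁿ` is determined by its one-dimensional projections.
  refine Measure.ext_of_charFunDual (funext fun L => ?_)
  have hL : ⇑L = fun x => ∑ i, L (Pi.single i 1) * x i := by
    funext x
    conv_lhs => rw [pi_eq_sum_univ' x]
    simp [mul_comm]
  rw [charFunDual_eq_charFun_map_one, charFunDual_eq_charFun_map_one, hL, hμ.2, hε.2]

theorem pi_gaussianReal :
    IsCenteredGaussian (Measure.pi fun _ : Fin n => gaussianReal 0 1) 1 := by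
  refine ⟨inferInstance, fun a => ?_⟩
  set P := Measure.pi fun _ : Fin n => gaussianReal 0 1
  have hid : MemLp (fun x : ℝ => x) 2 (gaussianReal 0 1) := memLp_id_gaussianReal 2
  have hcoord : ∀ i, HasGaussianLaw (fun x : Fin n → ℝ => a i * x i) P := fun i =>
    ((measurePreserving_eval (fun _ => gaussianReal 0 1) i).hasLaw.hasGaussianLaw).fun_smul (a i)
  have hindep : iIndepFun (fun i (x : Fin n → ℝ) => a i * x i) P :=
    iIndepFun_pi (X := fun i x => a i * x) fun i => by fun_prop
  rw [(hindep.hasGaussianLaw_fun_sum hcoord).map_eq_gaussianReal,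
    integral_weightedSum_pi (hid.integrable one_le_two), integral_id_gaussianReal, mul_zero,
    variance_weightedSum_pi hid, variance_fun_id_gaussianReal]
  simp [dotProduct, sq]

theorem map_mulVec (hμ : IsCenteredGaussian μ S) (A : Matrix (Fin n) (Fin n) ℝ) :
    IsCenteredGaussian (μ.map (A *ᵥ ·)) (A * S * Aᵀ) := by
  have := hμ.1
  have hA : Measurable (A *ᵥ · : (Fin n → ℝ) → Fin n → ℝ) :=
    (Continuous.matrix_mulVec continuous_const continuous_id).measurable
  refine ⟨Measure.isProbabilityMeasure_map hA.aemeasurable, fun a => ?_⟩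
  have hcomp : (fun y : Fin n → ℝ => ∑ i, a i * y i) ∘ (A *ᵥ ·) =
      fun x => ∑ i, (Aᵀ *ᵥ a) i * x i := by
    funext x
    change a ⬝ᵥ (A *ᵥ x) = (Aᵀ *ᵥ a) ⬝ᵥ x
    rw [dotProduct_mulVec, mulVec_transpose]
  rw [Measure.map_map (by fun_prop) hA, hcomp, hμ.2, ← mulVec_mulVec, ← mulVec_mulVec,
    dotProduct_mulVec a, ← mulVec_transpose]

theorem measurePreserving_mulVec {A : Matrix (Fin n) (Fin n) ℝ}
    (hμ : IsCenteredGaussian μ (A * Aᵀ)) :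
    MeasurePreserving (A *ᵥ ·) (Measure.pi fun _ => gaussianReal 0 1) μ where
  measurable := (Continuous.matrix_mulVec continuous_const continuous_id).measurable
  map_eq := eq_of_cov_eq (by simpa using pi_gaussianReal.map_mulVec A) hμ

theorem measurePreserving_prod {A B : Matrix (Fin n) (Fin n) ℝ}
    (hμ : IsCenteredGaussian μ (A * Aᵀ)) (hε : IsCenteredGaussian ε (B * Bᵀ)) :
    MeasurePreserving (fun q : Fin n → ℝ × ℝ => (A *ᵥ fun i => (q i).1, B *ᵥ fun i => (q i).2))
      (Measure.pi fun _ => (gaussianReal 0 1).prod (gaussianReal 0 1)) (μ.prod ε) := by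
  have := hμ.1
  have := hε.1
  exact (hμ.measurePreserving_mulVec.prod hε.measurePreserving_mulVec).comp
    (measurePreserving_arrowProdEquivProdArrow ℝ ℝ (Fin n) (fun _ => gaussianReal 0 1)
      fun _ => gaussianReal 0 1)

end IsCenteredGaussian

section GaussianLLN

variable {V : ∀ n, Matrix (Fin n) (Fin n) ℝ} {d e : ∀ n, Fin n → ℝ} {C D : ℝ}
  {μ ε : ∀ n, Measure (Fin n → ℝ)}

theorem IsCenteredGaussian.concentratesAt_normSq (hV : ∀ n, (V n)ᵀ * V n = 1)
    (hd : ∀ n i, d n i ∈ Set.Icc 0 C)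
    (hμ : ∀ n, IsCenteredGaussian (μ n) (V n * diagonal (d n) * (V n)ᵀ)) {F : ℝ}
    (hF : Tendsto (fun n : ℕ => (n : ℝ)⁻¹ * ∑ i, d n i) atTop (𝓝 F)) :
    ConcentratesAt μ atTop (fun n x => (n : ℝ)⁻¹ * ∑ i, x i ^ 2) F := by
  simp only [← eigenRoot_mul_transpose (V _) fun i => (hd _ i).1] at hμ
  have h := concentratesAt_normSq_pi (memLp_sq_gaussianReal 0 1) hV hd hF
  rw [integral_sq_gaussianReal, NNReal.coe_one, mul_one] at h
  exact .of_comp_measurePreserving (fun n => (hμ n).measurePreserving_mulVec)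
    (fun n => by fun_prop) h

theorem IsCenteredGaussian.concentratesAt_quadraticForm (hV : ∀ n, (V n)ᵀ * V n = 1)
    (hd : ∀ n i, d n i ∈ Set.Icc 0 C) (he : ∀ n i, |e n i| ≤ D)
    (hμ : ∀ n, IsCenteredGaussian (μ n) (V n * diagonal (d n) * (V n)ᵀ)) {H : ℝ}
    (hH : Tendsto (fun n : ℕ => (n : ℝ)⁻¹ * ∑ i, d n i * e n i) atTop (𝓝 H)) :
    ConcentratesAt μ atTop
      (fun n x => (n : ℝ)⁻¹ * (x ⬝ᵥ ((V n * diagonal (e n) * (V n)ᵀ) *ᵥ x))) H := by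
  simp only [← eigenRoot_mul_transpose (V _) fun i => (hd _ i).1] at hμ
  have h := concentratesAt_quadraticForm_pi (memLp_sq_gaussianReal 0 1) hV hd he hH
  rw [integral_sq_gaussianReal, NNReal.coe_one, mul_one] at h
  exact .of_comp_measurePreserving (fun n => (hμ n).measurePreserving_mulVec)
    (fun n => Continuous.measurable (by fun_prop)) h

theorem IsCenteredGaussian.concentratesAt_dotProduct (hV : ∀ n, (V n)ᵀ * V n = 1)
    (hd : ∀ n i, d n i ∈ Set.Icc 0 C) (he : ∀ n i, e n i ∈ Set.Icc 0 D)
    (hμ : ∀ n, IsCenteredGaussian (μ n) (V n * diagonal (d n) * (V n)ᵀ))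
    (hε : ∀ n, IsCenteredGaussian (ε n) (V n * diagonal (e n) * (V n)ᵀ)) :
    ConcentratesAt (fun n => (μ n).prod (ε n)) atTop
      (fun n p => (n : ℝ)⁻¹ * ∑ i, p.1 i * p.2 i) 0 := by
  simp only [← eigenRoot_mul_transpose (V _) fun i => (hd _ i).1] at hμ
  simp only [← eigenRoot_mul_transpose (V _) fun i => (he _ i).1] at hε
  have horth : ∫ z : ℝ × ℝ, z.1 * z.2 ∂(gaussianReal 0 1).prod (gaussianReal 0 1) = 0 := by
    rw [integral_prod_mul (fun x : ℝ => x) (fun x : ℝ => x), integral_id_gaussianReal, zero_mul]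
  have h := concentratesAt_dotProduct_pi (memLp_mul_prod_gaussianReal 0 0 1 1) horth hV
    (fun n i => (hd n i).2) fun n i => (he n i).2
  exact .of_comp_measurePreserving (fun n => (hμ n).measurePreserving_prod (hε n))
    (fun n => by fun_prop) h

end GaussianLLN

section RiemannSums

variable {E : Type*} [NormedAddCommGroup E] [NormedSpace ℝ E] [CompleteSpace E]

theorem integral_comp_natCeil (F : ℕ → E) (n : ℕ) :
    ∫ x in (0 : ℝ)..n, F ⌈x⌉₊ = ∑ k ∈ Finset.range n, F (k + 1) := by
  have hceil (k : ℕ) : Set.EqOn (fun _ => F (k + 1)) (fun x : ℝ => F ⌈x⌉₊)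
      (Set.uIoc (k : ℝ) (k + 1 : ℕ)) := by
    intro x hx
    rw [Set.uIoc_of_le (by simp)] at hx
    simp only [(Nat.ceil_eq_iff k.succ_ne_zero).2 hx]
  rw [← Nat.cast_zero, ← intervalIntegral.sum_integral_adjacent_intervals (a := Nat.cast)
    fun k _ => intervalIntegrable_const.congr (hceil k)]
  refine Finset.sum_congr rfl fun k _ => ?_
  rw [← intervalIntegral.integral_congr_ae (ae_of_all _ (hceil k))]
  simp

theorem integral_comp_natCeil_mul_div (h : ℝ → E) {n : ℕ} (hn : n ≠ 0) :
    ∫ x in (0 : ℝ)..1, h (⌈x * n⌉₊ / n) = (n : ℝ)⁻¹ • ∑ i : Fin n, h ((i + 1) / n) := by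
  rw [intervalIntegral.integral_comp_mul_right (fun y : ℝ => h (⌈y⌉₊ / n))
    (Nat.cast_ne_zero.2 hn), zero_mul, one_mul, integral_comp_natCeil fun k : ℕ => h (k / n),
    Fin.sum_univ_eq_sum_range fun k : ℕ => h ((k + 1) / n)]
  simp only [Nat.cast_succ]

theorem div_natCast_mem_Icc {k n : ℕ} (hkn : k ≤ n) : (k / n : ℝ) ∈ Set.Icc (0 : ℝ) 1 :=
  ⟨by positivity, div_le_one_of_le₀ (by exact_mod_cast hkn) n.cast_nonneg⟩

theorem tendsto_riemannSum {h : ℝ → E} {C : ℝ}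
    (hC : ∀ x ∈ Set.Icc (0 : ℝ) 1, ‖h x‖ ≤ C)
    (hcont : ∀ᵐ x ∂volume.restrict (Set.Icc (0 : ℝ) 1), ContinuousAt h x) :
    Tendsto (fun n : ℕ => (n : ℝ)⁻¹ • ∑ i : Fin n, h ((i + 1) / n)) atTop
      (𝓝 (∫ x in (0 : ℝ)..1, h x)) := by
  have hstep : Tendsto (fun n : ℕ => ∫ x in (0 : ℝ)..1, h (⌈x * n⌉₊ / n)) atTop
      (𝓝 (∫ x in (0 : ℝ)..1, h x)) := by
    rw [ae_restrict_iff' measurableSet_Icc] at hcont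
    refine intervalIntegral.tendsto_integral_filter_of_dominated_convergence (fun _ => C)
      (.of_forall fun n => ?_) (.of_forall fun n => .of_forall fun x hx => hC _ ?_)
      intervalIntegrable_const ?_
    · have hF : StronglyMeasurable fun k : ℕ => h (k / n) := .of_discrete
      have hceil : Measurable fun x : ℝ => ⌈x * n⌉₊ := by fun_prop
      exact (hF.comp_measurable hceil).aestronglyMeasurable
    · rw [Set.uIoc_of_le zero_le_one] at hx
      exact div_natCast_mem_Icc (Nat.ceil_le.2 (mul_le_of_le_one_left n.cast_nonneg hx.2))
    · filter_upwards [hcont] with x hx hx01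
      rw [Set.uIoc_of_le zero_le_one] at hx01
      exact (hx (Set.Ioc_subset_Icc_self hx01)).tendsto.comp
        ((tendsto_nat_ceil_mul_div_atTop hx01.1.le).comp tendsto_natCast_atTop_atTop)
  refine hstep.congr' ?_
  filter_upwards [eventually_ne_atTop 0] with n hn using integral_comp_natCeil_mul_div h hn

end RiemannSums

theorem ols_naive_inference_validity_general {V : ∀ n, Matrix (Fin n) (Fin n) ℝ}
    (hV : ∀ n, (V n)ᵀ * V n = 1) {d e : ∀ n, Fin n → ℝ} {C D : ℝ}
    (hd : ∀ n i, d n i ∈ Set.Icc 0 C) (he : ∀ n i, e n i ∈ Set.Icc 0 D) {F G H : ℝ}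
    (hF : Tendsto (fun n : ℕ => (n : ℝ)⁻¹ * ∑ i, d n i) atTop (𝓝 F))
    (hG : Tendsto (fun n : ℕ => (n : ℝ)⁻¹ * ∑ i, e n i) atTop (𝓝 G))
    (hH : Tendsto (fun n : ℕ => (n : ℝ)⁻¹ * ∑ i, d n i * e n i) atTop (𝓝 H))
    (hF₀ : F ≠ 0) (hG₀ : G ≠ 0) {μ ε : ∀ n, Measure (Fin n → ℝ)}
    (hμ : ∀ n, IsCenteredGaussian (μ n) (V n * diagonal (d n) * (V n)ᵀ))
    (hε : ∀ n, IsCenteredGaussian (ε n) (V n * diagonal (e n) * (V n)ᵀ)) :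
    TendstoInProbability
      (fun n => ((μ n).prod (ε n)).map fun p =>
        ((∑ i, p.1 i ^ 2) * (∑ i, p.2 i ^ 2) - (∑ i, p.1 i * p.2 i) ^ 2) / (∑ i, p.1 i ^ 2) ^ 2)
      (G / F) ∧
    TendstoInProbability
      (fun n => ((μ n).prod (ε n)).map fun p =>
        n * (p.1 ⬝ᵥ (V n * diagonal (e n) * (V n)ᵀ) *ᵥ p.1) / (∑ i, p.1 i ^ 2) ^ 2)
      (H / F ^ 2) ∧
    TendstoInProbability
      (fun n => ((μ n).prod (ε n)).map fun p =>
        n * (p.1 ⬝ᵥ (V n * diagonal (e n) * (V n)ᵀ) *ᵥ p.1) /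
          ((∑ i, p.1 i ^ 2) * (∑ i, p.2 i ^ 2) - (∑ i, p.1 i * p.2 i) ^ 2))
      (H / (F * G)) := by
  have := fun n => (hμ n).1
  have := fun n => (hε n).1
  have hQmeas (n) : Measurable fun p : (Fin n → ℝ) × (Fin n → ℝ) =>
      p.1 ⬝ᵥ (V n * diagonal (e n) * (V n)ᵀ) *ᵥ p.1 := Continuous.measurable (by fun_prop)
  have he_abs (n i) : |e n i| ≤ D := by rw [abs_of_nonneg (he n i).1]; exact (he n i).2
  have hfst (n) := measurePreserving_fst (μ := μ n) (ν := ε n)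
  have hsnd (n) := measurePreserving_snd (μ := μ n) (ν := ε n)
  have hX := (IsCenteredGaussian.concentratesAt_normSq hV hd hμ hF).comp_measurePreserving hfst
  have hE := (IsCenteredGaussian.concentratesAt_normSq hV he hε hG).comp_measurePreserving hsnd
  have hQ := (IsCenteredGaussian.concentratesAt_quadraticForm hV hd he_abs hμ
    hH).comp_measurePreserving hfst
  have hXE := IsCenteredGaussian.concentratesAt_dotProduct hV hd he hμ hε
  have hresid := (hX.mul hE).sub (hXE.pow 2)
  rw [zero_pow two_ne_zero, sub_zero] at hresid
  have hnaive := hresid.div (hX.pow 2) (pow_ne_zero 2 hF₀)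
  rw [sq F, mul_div_mul_left _ _ hF₀] at hnaive
  have htrue := hQ.div (hX.pow 2) (pow_ne_zero 2 hF₀)
  have hratio := hQ.div hresid (mul_ne_zero hF₀ hG₀)
  have hn : ∀ᶠ n : ℕ in atTop, n ≠ 0 := eventually_ne_atTop 0
  refine ⟨(hnaive.congr' <| hn.mono fun n hn => funext fun p => ?_).tendstoInProbability_map
      fun n => by fun_prop,
    (htrue.congr' <| hn.mono fun n hn => funext fun p => ?_).tendstoInProbability_map
      fun n => (((hQmeas n).const_mul _).div (by fun_prop)).aemeasurable,
    (hratio.congr' <| hn.mono fun n hn => funext fun p => ?_).tendstoInProbability_map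
      fun n => (((hQmeas n).const_mul _).div (by fun_prop)).aemeasurable⟩
  all_goals field_simp

/-- **Theorem 5 (validity of naive OLS inference).** With `Σ_X = V diag(f(i/n)) Vᵀ`,
`Σ_ε = V diag(g(i/n)) Vᵀ`, `X ~ N(0,Σ_X)`, `ε ~ N(0,Σ_ε)` independent, `Y = βX + ε`,
`β̂ = XᵀY/‖X‖²`, `Var(β̂|X) = XᵀΣ_εX/‖X‖⁴` and
`V̂_naive = εᵀ(‖X‖²I - XXᵀ)ε/(n‖X‖⁴) = (‖X‖²‖ε‖² - (Xᵀε)²)/(n‖X‖⁴)`: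
`n·V̂_naive → (∫g)/(∫f)`, `n·Var(β̂|X) → (∫fg)/(∫f)²` and
`Var(β̂|X)/V̂_naive → (∫fg)/((∫f)(∫g))` in probability, and the limiting ratio is `≤ 1`
(naive i.i.d. inference is asymptotically valid) iff `∫fg ≤ (∫f)(∫g)`. -/
theorem ols_naive_inference_validity
    (V : (n : ℕ) → Matrix (Fin n) (Fin n) ℝ) (hV : ∀ n, (V n)ᵀ * V n = 1)
    (f g : ℝ → ℝ)
    (hf_meas : Measurable f) (hg_meas : Measurable g)
    (hf_pos : ∀ x ∈ Set.Icc (0 : ℝ) 1, 0 < f x) (hg_pos : ∀ x ∈ Set.Icc (0 : ℝ) 1, 0 < g x)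
    (hf_bdd : ∃ C : ℝ, ∀ x ∈ Set.Icc (0 : ℝ) 1, f x ≤ C)
    (hg_bdd : ∃ C : ℝ, ∀ x ∈ Set.Icc (0 : ℝ) 1, g x ≤ C)
    (hf_cont : ∀ᵐ x ∂(volume.restrict (Set.Icc (0 : ℝ) 1)), ContinuousAt f x)
    (hg_cont : ∀ᵐ x ∂(volume.restrict (Set.Icc (0 : ℝ) 1)), ContinuousAt g x)
    (hf_int : 0 < ∫ x in (0 : ℝ)..1, f x) (hg_int : 0 < ∫ x in (0 : ℝ)..1, g x)
    (μ ε : (n : ℕ) → Measure (Fin n → ℝ))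
    (hμ : ∀ n, IsCenteredGaussian (μ n) (specMatrix n (V n) f))
    (hε : ∀ n, IsCenteredGaussian (ε n) (specMatrix n (V n) g)) :
    -- `n · V̂_naive = εᵀ(‖X‖²I - XXᵀ)ε / ‖X‖⁴ → (∫g)/(∫f)` in probability
    TendstoInProbability
      (fun n => Measure.map
        (fun p : (Fin n → ℝ) × (Fin n → ℝ) =>
          ((∑ i, p.1 i ^ 2) * (∑ i, p.2 i ^ 2) - (∑ i, p.1 i * p.2 i) ^ 2) /
            (∑ i, p.1 i ^ 2) ^ 2)
        ((μ n).prod (ε n)))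
      ((∫ x in (0 : ℝ)..1, g x) / (∫ x in (0 : ℝ)..1, f x)) ∧
    -- `n · Var(β̂|X) = n XᵀΣ_εX / ‖X‖⁴ → (∫fg)/(∫f)²` in probability
    TendstoInProbability
      (fun n => Measure.map
        (fun p : (Fin n → ℝ) × (Fin n → ℝ) =>
          (n : ℝ) * (p.1 ⬝ᵥ (specMatrix n (V n) g).mulVec p.1) / (∑ i, p.1 i ^ 2) ^ 2)
        ((μ n).prod (ε n)))
      ((∫ x in (0 : ℝ)..1, f x * g x) / (∫ x in (0 : ℝ)..1, f x) ^ 2) ∧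
    -- the ratio `Var(β̂|X)/V̂_naive = n XᵀΣ_εX / (‖X‖²‖ε‖² - (Xᵀε)²) → (∫fg)/((∫f)(∫g))`
    TendstoInProbability
      (fun n => Measure.map
        (fun p : (Fin n → ℝ) × (Fin n → ℝ) =>
          (n : ℝ) * (p.1 ⬝ᵥ (specMatrix n (V n) g).mulVec p.1) /
            ((∑ i, p.1 i ^ 2) * (∑ i, p.2 i ^ 2) - (∑ i, p.1 i * p.2 i) ^ 2))
        ((μ n).prod (ε n)))
      ((∫ x in (0 : ℝ)..1, f x * g x) /
        ((∫ x in (0 : ℝ)..1, f x) * (∫ x in (0 : ℝ)..1, g x))) ∧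
    -- the limiting ratio is ≤ 1 (validity of naive inference) iff `∫fg ≤ (∫f)(∫g)`
    ((∫ x in (0 : ℝ)..1, f x * g x) /
        ((∫ x in (0 : ℝ)..1, f x) * (∫ x in (0 : ℝ)..1, g x)) ≤ 1 ↔
      (∫ x in (0 : ℝ)..1, f x * g x) ≤
        (∫ x in (0 : ℝ)..1, f x) * (∫ x in (0 : ℝ)..1, g x)) := by
  obtain ⟨C, hfC⟩ := hf_bdd
  obtain ⟨D, hgD⟩ := hg_bdd
  have hgrid {n : ℕ} (i : Fin n) : ((i : ℝ) + 1) / n ∈ Set.Icc (0 : ℝ) 1 := by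
    exact_mod_cast div_natCast_mem_Icc i.isLt
  have hf_abs (x) (hx : x ∈ Set.Icc (0 : ℝ) 1) : ‖f x‖ ≤ C :=
    (Real.norm_of_nonneg (hf_pos x hx).le).trans_le (hfC x hx)
  have hg_abs (x) (hx : x ∈ Set.Icc (0 : ℝ) 1) : ‖g x‖ ≤ D :=
    (Real.norm_of_nonneg (hg_pos x hx).le).trans_le (hgD x hx)
  have hfg := tendsto_riemannSum (fun x hx => norm_mul_le_of_le (hf_abs x hx) (hg_abs x hx))
    (hf_cont.mp (hg_cont.mono fun x hgx hfx => hfx.mul hgx))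
  obtain ⟨hnaive, htrue, hratio⟩ := ols_naive_inference_validity_general hV
    (fun n i => ⟨(hf_pos _ (hgrid i)).le, hfC _ (hgrid i)⟩)
    (fun n i => ⟨(hg_pos _ (hgrid i)).le, hgD _ (hgrid i)⟩)
    (tendsto_riemannSum hf_abs hf_cont) (tendsto_riemannSum hg_abs hg_cont) hfg
    hf_int.ne' hg_int.ne' hμ hε
  exact ⟨hnaive, htrue, hratio, div_le_one (mul_pos hf_int hg_int)⟩

end
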